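/- For every i, j ∈ {1,…,k} with i ≠ j, the exclusive versions of the operations p ↦ p ∪ i, p ↦ p ∖ i, and p ↦ η_{i,j}(p) all preserve representation: for all finite families R, S of treewidth patterns such that R represents S, the family ôp(R) represents ôp(S), where ôp(S) denotes the set of treewidth patterns p' such that the number of q ∈ S with op(q) = p' is odd. -/

import Mathlib

/-- A (candidate) treewidth pattern: a finite collection of blocks of labels in
`{0,…,k}`. -/
abbrev TWP (k : ℕ) := Finset (Finset (Fin (k + 1)))

/-- A treewidth pattern: a partition of a subset `L_p ⊆ {0,…,k}` containing `0`. -/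
def IsTWPat {k : ℕ} (p : TWP k) : Prop :=
  (∀ S ∈ p, S.Nonempty) ∧ (∀ S ∈ p, ∀ T ∈ p, S ≠ T → Disjoint S T) ∧
    ∃ S ∈ p, (0 : Fin (k + 1)) ∈ S

/-- The label set `L_p` of a pattern. -/
def labels {k : ℕ} (p : TWP k) : Finset (Fin (k + 1)) := p.sup id

/-- The glueing of the canonical forests of two treewidth patterns `p` and `q`: the
(identified) boundary vertices are represented by their labels, and each block gets a
star center adjacent to the labels it contains.  (Labels outside `L_p` are isolated and
affect neither acyclicity nor components meeting the boundary.) -/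
def glueTP {k : ℕ} (p q : TWP k) :
    SimpleGraph (Fin (k + 1) ⊕ ({S // S ∈ p} ⊕ {S // S ∈ q})) :=
  SimpleGraph.fromRel fun x y =>
    match x, y with
    | Sum.inl ℓ, Sum.inr (Sum.inl S) => ℓ ∈ S.1
    | Sum.inl ℓ, Sum.inr (Sum.inr S) => ℓ ∈ S.1
    | _, _ => False

/-- Compatibility `p ◁ q` of treewidth patterns: the label sets agree and the glueing of
the canonical forests is acyclic. -/
def Compat {k : ℕ} (p q : TWP k) : Prop :=
  labels p = labels q ∧ (glueTP p q).IsAcyclic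

open scoped Classical in
/-- The join `p ⋈ q` of two treewidth patterns: `⊥` (i.e. `none`) if the label sets differ
or the glueing of the canonical forests contains a cycle; otherwise the pattern whose
blocks are the label sets of the connected components of the glued forest. -/
noncomputable def joinTP {k : ℕ} (p q : TWP k) : Option (TWP k) :=
  if labels p = labels q ∧ (glueTP p q).IsAcyclic then
    some ((labels p).image fun ℓ =>
      (labels p).filter fun ℓ' => (glueTP p q).Reachable (Sum.inl ℓ) (Sum.inl ℓ'))
  else none

open scoped Classical in
/-- A family `R` of treewidth patterns represents a family `S` if for every treewidth
pattern `r`, the numbers of patterns of `R` and of `S` compatible with `r` agree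
modulo 2. -/
def Represents {k : ℕ} (R S : Finset (TWP k)) : Prop :=
  ∀ r : TWP k, IsTWPat r →
    (R.filter fun pp => Compat pp r).card % 2 = (S.filter fun pp => Compat pp r).card % 2

/-- The operation `p ∪ i`: `⊥` if `i ∈ L_p`, otherwise `p` with `{i}` added as a new
singleton block. -/
def addLab {k : ℕ} (i : Fin (k + 1)) (p : TWP k) : Option (TWP k) :=
  if i ∈ labels p then none else some (insert {i} p)

/-- The operation `p ∖ i`: `p` itself if `i ∉ L_p`, otherwise the pattern obtained by
removing `i` from its block (deleting the block if it becomes empty). -/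
def delLab {k : ℕ} (i : Fin (k + 1)) (p : TWP k) : Option (TWP k) :=
  some ((p.filter fun S => i ∉ S) ∪
    ((p.filter fun S => i ∈ S).image fun S => S.erase i).filter fun S => S.Nonempty)

/-- The operation `η_{i,j}(p)`: `⊥` if `i` and `j` lie in the same block, `p` if `i` or
`j` is missing from `L_p`, and otherwise the pattern obtained by merging the blocks
containing `i` and `j`. -/
def etaOp {k : ℕ} (i j : Fin (k + 1)) (p : TWP k) : Option (TWP k) :=
  if ∃ S ∈ p, i ∈ S ∧ j ∈ S then none
  else if i ∉ labels p ∨ j ∉ labels p then some p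
  else some (insert ((p.filter fun S => i ∈ S ∨ j ∈ S).sup id)
    (p.filter fun S => i ∉ S ∧ j ∉ S))

/-- The exclusive version `ôp(S)` of an operation: the set of patterns `p'` (excluding
`⊥`) such that the number of `q ∈ S` with `op q = p'` is odd. -/
def exOp {k : ℕ} (op : TWP k → Option (TWP k)) (S : Finset (TWP k)) : Finset (TWP k) :=
  (S.biUnion fun q => (op q).toFinset).filter fun p' =>
    (S.filter fun q => op q = some p').card % 2 = 1

theorem leaf_aux {V : Type*} [Finite V] (G : SimpleGraph V) (hG : G.IsAcyclic)
    (h : ∀ u v, G.Adj u v → ∃ w, w ≠ u ∧ G.Adj v w) (u v : V) : ¬ G.Adj u v := by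
  intro huv
  have : Nonempty V := ⟨u⟩
  obtain ⟨a, b, p, hp, hmax⟩ := SimpleGraph.Walk.exists_isPath_forall_isPath_length_le_length G
  have hlen : 1 ≤ p.length := by
    have := hmax _ _ (huv.toWalk) (by simp [huv.ne])
    simpa using this
  have hnil : ¬ p.Nil := by
    rw [SimpleGraph.Walk.not_nil_iff_lt_length]; omega
  obtain ⟨w, hw, hbw⟩ := h _ _ (p.adj_penultimate hnil)
  by_cases hs : w ∈ p.support
  · exact hw (hG.eq_penultimate_of_adj_end hp hbw hs)
  · have := hmax _ _ _ (hp.concat hs hbw)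
    simp at this

/-- Linear-algebraic version of acyclicity. -/
def Ev {k : ℕ} (p q : TWP k) : Prop :=
  ∀ f : Fin (k + 1) → ZMod 2, (∀ l, l ∉ labels p → f l = 0) →
    (∀ S ∈ p, ∑ l ∈ S, f l = 0) → (∀ S ∈ q, ∑ l ∈ S, f l = 0) → ∀ l, f l = 0

theorem mem_labels {k : ℕ} (p : TWP k) (l : Fin (k + 1)) : l ∈ labels p ↔ ∃ S ∈ p, l ∈ S := by
  simp [labels, Finset.mem_sup]

theorem exists_other {k : ℕ} (f : Fin (k + 1) → ZMod 2) (S : Finset (Fin (k + 1)))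
    (h : ∑ l ∈ S, f l = 0) (l : Fin (k + 1)) (hl : l ∈ S) (hf : f l ≠ 0) :
    ∃ m ∈ S, m ≠ l ∧ f m ≠ 0 := by
  by_contra hc
  push Not at hc
  rw [Finset.sum_eq_single_of_mem l hl hc] at h
  exact hf h

theorem glue_adj_p {k : ℕ} (p q : TWP k) (l : Fin (k + 1)) (S : {S // S ∈ p}) :
    (glueTP p q).Adj (Sum.inl l) (Sum.inr (Sum.inl S)) ↔ l ∈ S.1 := by
  simp [glueTP]

theorem glue_adj_q {k : ℕ} (p q : TWP k) (l : Fin (k + 1)) (S : {S // S ∈ q}) :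
    (glueTP p q).Adj (Sum.inl l) (Sum.inr (Sum.inr S)) ↔ l ∈ S.1 := by
  simp [glueTP]

theorem glue_adj_ll {k : ℕ} (p q : TWP k) (l m : Fin (k + 1)) :
    ¬ (glueTP p q).Adj (Sum.inl l) (Sum.inl m) := by
  simp [glueTP]

theorem glue_adj_rr {k : ℕ} (p q : TWP k) (x y) :
    ¬ (glueTP p q).Adj (Sum.inr x) (Sum.inr y) := by
  rcases x with x | x <;> rcases y with y | y <;> simp [glueTP]

theorem ev_of_acyclic {k : ℕ} (p q : TWP k) (hL : labels p = labels q)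
    (h : (glueTP p q).IsAcyclic) : Ev p q := by
  intro f hf hp hq l
  by_contra hl
  let H : SimpleGraph (Fin (k + 1) ⊕ ({S // S ∈ p} ⊕ {S // S ∈ q})) :=
    { Adj := fun x y => (glueTP p q).Adj x y ∧ ∀ m, (x = Sum.inl m ∨ y = Sum.inl m) → f m ≠ 0
      symm := ⟨fun x y hxy => ⟨hxy.1.symm, fun m hm => hxy.2 m hm.symm⟩⟩
      loopless := ⟨fun x hx => hx.1.ne rfl⟩ }
  have hH : H.IsAcyclic := h.anti (fun x y hxy => hxy.1)
  have hlp : l ∈ labels p := by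
    by_contra hc
    exact hl (hf l hc)
  obtain ⟨S, hS, hlS⟩ := (mem_labels p l).1 hlp
  refine leaf_aux H hH ?_ (Sum.inl l) (Sum.inr (Sum.inl ⟨S, hS⟩)) ⟨(glue_adj_p p q _ _).2 hlS, ?_⟩
  · rintro (u | u) (v | v) ⟨h1, h2⟩
    · exact (glue_adj_ll p q _ _ h1).elim
    · rcases v with ⟨T, hT⟩ | ⟨T, hT⟩
      · have h3 := (glue_adj_p p q _ _).1 h1
        obtain ⟨m, hm, hmu, hfm⟩ := exists_other f T (hp T hT) u h3 (h2 u (Or.inl rfl))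
        refine ⟨Sum.inl m, by simpa using hmu, ((glue_adj_p p q m ⟨T, hT⟩).2 hm).symm, ?_⟩
        intro a ha; simp at ha; exact ha ▸ hfm
      · have h3 := (glue_adj_q p q _ _).1 h1
        obtain ⟨m, hm, hmu, hfm⟩ := exists_other f T (hq T hT) u h3 (h2 u (Or.inl rfl))
        refine ⟨Sum.inl m, by simpa using hmu, ((glue_adj_q p q m ⟨T, hT⟩).2 hm).symm, ?_⟩
        intro a ha; simp at ha; exact ha ▸ hfm
    · have hv : f v ≠ 0 := h2 v (Or.inr rfl)
      have hvp : v ∈ labels p := by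
        by_contra hc
        exact hv (hf v hc)
      rcases u with u | u
      · obtain ⟨T, hT, hvT⟩ := (mem_labels q v).1 (hL ▸ hvp)
        refine ⟨Sum.inr (Sum.inr ⟨T, hT⟩), by simp, (glue_adj_q p q v ⟨T, hT⟩).2 hvT, ?_⟩
        intro a ha; simp at ha; exact ha ▸ hv
      · obtain ⟨T, hT, hvT⟩ := (mem_labels p v).1 hvp
        refine ⟨Sum.inr (Sum.inl ⟨T, hT⟩), by simp, (glue_adj_p p q v ⟨T, hT⟩).2 hvT, ?_⟩
        intro a ha; simp at ha; exact ha ▸ hv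
    · exact (glue_adj_rr p q _ _ h1).elim
  · intro a ha; simp at ha; exact ha ▸ hl

def Disj {k : ℕ} (p : TWP k) : Prop := ∀ S ∈ p, ∀ T ∈ p, ∀ l, l ∈ S → l ∈ T → S = T

theorem IsTWPat.disj {k : ℕ} {p : TWP k} (h : IsTWPat p) : Disj p := by
  intro S hS T hT l h1 h2
  by_contra hc
  exact Finset.disjoint_left.1 (h.2.1 S hS T hT hc) h1 h2

theorem acyclic_of_ev {k : ℕ} (p q : TWP k) (hp : Disj p) (hq : Disj q)
    (h : Ev p q) : (glueTP p q).IsAcyclic := by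
  classical
  intro v c hc
  -- labels on the cycle
  let f : Fin (k + 1) → ZMod 2 := fun l => if Sum.inl l ∈ c.support then 1 else 0
  have hadj : ∀ x y, c.toSubgraph.Adj x y → (glueTP p q).Adj x y :=
    fun x y hxy => c.toSubgraph.adj_sub hxy
  have hnb : ∀ l, Sum.inl l ∈ c.support → ∃ S : {S // S ∈ p}, ∃ T : {S // S ∈ q},
      c.toSubgraph.Adj (Sum.inl l) (Sum.inr (Sum.inl S)) ∧
      c.toSubgraph.Adj (Sum.inl l) (Sum.inr (Sum.inr T)) := by
    intro l hl
    have h2 := hc.ncard_neighborSet_toSubgraph_eq_two hl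
    obtain ⟨x, y, hxy, hset⟩ := Set.ncard_eq_two.1 h2
    have hx : c.toSubgraph.Adj (Sum.inl l) x := by
      have : x ∈ c.toSubgraph.neighborSet (Sum.inl l) := by simp [hset]
      exact this
    have hy : c.toSubgraph.Adj (Sum.inl l) y := by
      have : y ∈ c.toSubgraph.neighborSet (Sum.inl l) := by simp [hset]
      exact this
    rcases x with x | x | x
    · exact (glue_adj_ll p q _ _ (hadj _ _ hx)).elim
    · rcases y with y | y | y
      · exact (glue_adj_ll p q _ _ (hadj _ _ hy)).elim
      · refine (hxy ?_).elim
        have := hp _ x.2 _ y.2 l ((glue_adj_p p q _ _).1 (hadj _ _ hx))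
          ((glue_adj_p p q _ _).1 (hadj _ _ hy))
        rw [Subtype.ext this]
      · exact ⟨x, y, hx, hy⟩
    · rcases y with y | y | y
      · exact (glue_adj_ll p q _ _ (hadj _ _ hy)).elim
      · exact ⟨y, x, hy, hx⟩
      · refine (hxy ?_).elim
        have := hq _ x.2 _ y.2 l ((glue_adj_q p q _ _).1 (hadj _ _ hx))
          ((glue_adj_q p q _ _).1 (hadj _ _ hy))
        rw [Subtype.ext this]
  have hsum : ∀ (b : {S // S ∈ p} ⊕ {S // S ∈ q}) (S : Finset (Fin (k + 1))),
      (∀ l, (l ∈ S ∧ Sum.inl l ∈ c.support) ↔ c.toSubgraph.Adj (Sum.inr b) (Sum.inl l)) →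
      ∑ l ∈ S, f l = 0 := by
    intro b S hS
    simp only [f]
    rw [Finset.sum_boole]
    have himg : c.toSubgraph.neighborSet (Sum.inr b) =
        ((S.filter fun l => Sum.inl l ∈ c.support).map ⟨Sum.inl, Sum.inl_injective⟩ :
          Finset (Fin (k + 1) ⊕ ({S // S ∈ p} ⊕ {S // S ∈ q}))) := by
      ext x
      rcases x with x | x
      · simp [← hS]
      · simp
        intro hx
        exact glue_adj_rr p q _ _ (hadj _ _ hx)
    have hcard : (c.toSubgraph.neighborSet (Sum.inr b)).ncard =
        (S.filter fun l => Sum.inl l ∈ c.support).card := by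
      rw [himg, Set.ncard_coe_finset, Finset.card_map]
    rw [← hcard]
    by_cases hb : Sum.inr b ∈ c.support
    · rw [hc.ncard_neighborSet_toSubgraph_eq_two hb]; rfl
    · have : c.toSubgraph.neighborSet (Sum.inr b) = ∅ := by
        ext x
        simp
        intro hx
        exact hb ((c.mem_verts_toSubgraph).1 (c.toSubgraph.edge_vert hx))
      simp [this]
  have hz := h f ?_ ?_ ?_
  · have hnil : ¬ c.Nil := hc.not_nil
    have h1 := c.toSubgraph_adj_snd hnil
    have : ∃ l, Sum.inl l ∈ c.support := by
      rcases v with l | b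
      · exact ⟨l, c.start_mem_support⟩
      · rcases hw : c.snd with l | b'
        · refine ⟨l, ?_⟩
          rw [← hw]
          exact (c.mem_verts_toSubgraph).1 (c.toSubgraph.edge_vert h1.symm)
        · rw [hw] at h1
          exact (glue_adj_rr p q _ _ (hadj _ _ h1)).elim
    obtain ⟨l, hl⟩ := this
    have := hz l
    simp [f, hl] at this
  · intro l hl
    simp only [f]
    rw [if_neg]
    intro hs
    obtain ⟨S, T, h1, h2⟩ := hnb l hs
    exact hl ((mem_labels p l).2 ⟨S.1, S.2, (glue_adj_p p q _ _).1 (hadj _ _ h1)⟩)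
  · intro S hS
    refine hsum (Sum.inl ⟨S, hS⟩) S fun l => ⟨?_, ?_⟩
    · rintro ⟨h1, h2⟩
      obtain ⟨A, B, h3, h4⟩ := hnb l h2
      have : A = ⟨S, hS⟩ := Subtype.ext
        (hp _ A.2 _ hS l ((glue_adj_p p q _ _).1 (hadj _ _ h3)) h1)
      rw [← this]
      exact h3.symm
    · intro h1
      exact ⟨(glue_adj_p p q l ⟨S, hS⟩).1 (hadj _ _ h1.symm),
        (c.mem_verts_toSubgraph).1 (c.toSubgraph.edge_vert h1.symm)⟩
  · intro S hS
    refine hsum (Sum.inr ⟨S, hS⟩) S fun l => ⟨?_, ?_⟩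
    · rintro ⟨h1, h2⟩
      obtain ⟨A, B, h3, h4⟩ := hnb l h2
      have : B = ⟨S, hS⟩ := Subtype.ext
        (hq _ B.2 _ hS l ((glue_adj_q p q _ _).1 (hadj _ _ h4)) h1)
      rw [← this]
      exact h4.symm
    · intro h1
      exact ⟨(glue_adj_q p q l ⟨S, hS⟩).1 (hadj _ _ h1.symm),
        (c.mem_verts_toSubgraph).1 (c.toSubgraph.edge_vert h1.symm)⟩

theorem compat_iff {k : ℕ} {p q : TWP k} (hp : Disj p) (hq : Disj q) :
    Compat p q ↔ labels p = labels q ∧ Ev p q :=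
  ⟨fun h => ⟨h.1, ev_of_acyclic p q h.1 h.2⟩, fun h => ⟨h.1, acyclic_of_ev p q hp hq h.2⟩⟩

theorem Compat.symm' {k : ℕ} {p q : TWP k} (hp : Disj p) (hq : Disj q) (h : Compat p q) :
    Compat q p := by
  rw [compat_iff hp hq] at h
  rw [compat_iff hq hp]
  refine ⟨h.1.symm, fun f h1 h2 h3 => h.2 f (by rw [h.1]; exact h1) h3 h2⟩

def delP {k : ℕ} (i : Fin (k + 1)) (p : TWP k) : TWP k :=
  (p.filter fun S => i ∉ S) ∪
    ((p.filter fun S => i ∈ S).image fun S => S.erase i).filter fun S => S.Nonempty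

theorem mem_delP {k : ℕ} (i : Fin (k + 1)) (p : TWP k) (S : Finset (Fin (k + 1))) :
    S ∈ delP i p ↔ (S ∈ p ∧ i ∉ S) ∨ (S.Nonempty ∧ ∃ T ∈ p, i ∈ T ∧ T.erase i = S) := by
  simp only [delP, Finset.mem_union, Finset.mem_filter, Finset.mem_image]
  grind

theorem mem_labels_delP {k : ℕ} (i : Fin (k + 1)) (p : TWP k) (l : Fin (k + 1)) :
    l ∈ labels (delP i p) ↔ l ∈ labels p ∧ l ≠ i := by
  simp only [mem_labels, mem_delP]
  constructor
  · rintro ⟨S, (⟨h1, h2⟩ | ⟨h0, T, h1, h2, rfl⟩), h3⟩ <;> grind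
  · rintro ⟨⟨S, h1, h2⟩, h3⟩
    by_cases hi : i ∈ S
    · exact ⟨S.erase i, Or.inr ⟨⟨l, by grind⟩, S, h1, hi, rfl⟩, by grind⟩
    · exact ⟨S, Or.inl ⟨h1, hi⟩, h2⟩

theorem mem_labels_ins {k : ℕ} (i : Fin (k + 1)) (p : TWP k) (l : Fin (k + 1)) :
    l ∈ labels (insert {i} p) ↔ l = i ∨ l ∈ labels p := by
  simp [mem_labels]

theorem pat_delP {k : ℕ} {i : Fin (k + 1)} (hi : i ≠ 0) {p : TWP k} (h : IsTWPat p) :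
    IsTWPat (delP i p) := by
  have hd := h.disj
  obtain ⟨h1, h2, h3⟩ := h
  refine ⟨?_, ?_, ?_⟩
  · intro S hS
    rw [mem_delP] at hS
    rcases hS with hS | hS
    · exact h1 S hS.1
    · exact hS.1
  · intro S hS T hT hST
    rw [mem_delP] at hS hT
    rw [Finset.disjoint_left]
    intro l hl hl'
    apply hST
    rcases hS with ⟨hS, hS'⟩ | ⟨-, S', hS, hS', rfl⟩ <;>
    rcases hT with ⟨hT, hT'⟩ | ⟨-, T', hT, hT', rfl⟩
    · exact hd S hS T hT l hl hl'
    · have := hd S hS T' hT l hl (by grind)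
      grind
    · have := hd S' hS T hT l (by grind) hl'
      grind
    · have := hd S' hS T' hT l (by grind) (by grind)
      grind
  · have := (mem_labels (delP i p) 0).1
      ((mem_labels_delP i p 0).2 ⟨(mem_labels p 0).2 h3, hi.symm⟩)
    exact this

theorem pat_ins {k : ℕ} {i : Fin (k + 1)} {p : TWP k} (h : IsTWPat p) (hi : i ∉ labels p) :
    IsTWPat (insert {i} p) := by
  obtain ⟨h1, h2, S0, h3, h4⟩ := h
  rw [mem_labels] at hi
  refine ⟨?_, ?_, S0, by simp [h3], h4⟩
  · intro S hS
    rcases Finset.mem_insert.1 hS with rfl | hS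
    · simp
    · exact h1 S hS
  · intro S hS T hT hST
    rcases Finset.mem_insert.1 hS with rfl | hS <;> rcases Finset.mem_insert.1 hT with rfl | hT
    · exact (hST rfl).elim
    · simp; grind
    · simp; grind
    · exact h2 S hS T hT hST

theorem sum_delP {k : ℕ} (i : Fin (k + 1)) (p : TWP k) (f : Fin (k + 1) → ZMod 2)
    (hf : f i = 0) :
    (∀ S ∈ delP i p, ∑ l ∈ S, f l = 0) ↔ (∀ S ∈ p, ∑ l ∈ S, f l = 0) := by
  have he : ∀ S : Finset (Fin (k + 1)), ∑ l ∈ S.erase i, f l = ∑ l ∈ S, f l :=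
    fun S => Finset.sum_erase S hf
  constructor
  · intro h S hS
    by_cases hi : i ∈ S
    · by_cases hn : (S.erase i).Nonempty
      · rw [← he]
        exact h _ ((mem_delP i p _).2 (Or.inr ⟨hn, S, hS, hi, rfl⟩))
      · rw [← he, Finset.not_nonempty_iff_eq_empty.1 hn, Finset.sum_empty]
    · exact h S ((mem_delP i p _).2 (Or.inl ⟨hS, hi⟩))
  · intro h S hS
    rcases (mem_delP i p S).1 hS with hS | ⟨-, T, hT, -, rfl⟩
    · exact h S hS.1
    · rw [he]; exact h T hT

theorem add_dual {k : ℕ} {i : Fin (k + 1)} (hi0 : i ≠ 0) {q r : TWP k} (hq : IsTWPat q)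
    (hr : IsTWPat r) (hi : i ∉ labels q) :
    Compat (insert {i} q) r ↔ i ∈ labels r ∧ Compat q (delP i r) := by
  rw [compat_iff (pat_ins hq hi).disj hr.disj, compat_iff hq.disj (pat_delP hi0 hr).disj]
  have hlab : labels (insert {i} q) = labels r ↔ i ∈ labels r ∧ labels q = labels (delP i r) := by
    simp only [Finset.ext_iff, mem_labels_ins, mem_labels_delP]
    grind
  rw [hlab, and_assoc]
  refine and_congr_right fun hir => and_congr_right fun hl => ?_
  constructor
  · intro h f h1 h2 h3
    have hfi : f i = 0 := h1 i hi
    refine h f ?_ ?_ ?_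
    · intro l hl; exact h1 l fun hc => hl ((mem_labels_ins i q l).2 (Or.inr hc))
    · intro S hS
      rcases Finset.mem_insert.1 hS with rfl | hS
      · simpa using hfi
      · exact h2 S hS
    · exact (sum_delP i r f hfi).1 h3
  · intro h f h1 h2 h3
    have hfi : f i = 0 := by simpa using h2 {i} (by simp)
    refine h f ?_ ?_ ?_
    · intro l hl
      by_cases hli : l = i
      · exact hli ▸ hfi
      · exact h1 l fun hc => by
          rcases (mem_labels_ins i q l).1 hc with hc | hc
          · exact hli hc
          · exact hl hc
    · intro S hS
      exact h2 S (by simp [hS])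
    · exact (sum_delP i r f hfi).2 h3

open scoped Classical in
theorem exOp_count {k : ℕ} (op : TWP k → Option (TWP k)) (R : Finset (TWP k))
    (P : TWP k → Prop) :
    (((exOp op R).filter fun p => P p).card : ZMod 2) =
      ∑ q ∈ R, if ∃ p', op q = some p' ∧ P p' then 1 else 0 := by
  set B := (R.biUnion fun q => (op q).toFinset) with hB
  have h1 : ∀ q ∈ R, (if ∃ p', op q = some p' ∧ P p' then (1 : ZMod 2) else 0) =
      ∑ p' ∈ B.filter P, if op q = some p' then 1 else 0 := by
    intro q hq
    split_ifs with h
    · obtain ⟨p', h1, h2⟩ := h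
      rw [Finset.sum_eq_single_of_mem p']
      · simp [h1]
      · simp only [hB, Finset.mem_filter, Finset.mem_biUnion]
        exact ⟨⟨q, hq, by simp [h1]⟩, h2⟩
      · intro b _ hb
        rw [if_neg]
        rw [h1]
        simpa using hb.symm
    · symm
      apply Finset.sum_eq_zero
      intro p' hp'
      rw [if_neg]
      intro hc
      exact h ⟨p', hc, (Finset.mem_filter.1 hp').2⟩
  rw [Finset.sum_congr rfl h1, Finset.sum_comm]
  simp only [Finset.sum_boole]
  have h2 : (exOp op R).filter (fun p => P p) =
      (B.filter P).filter fun p' => (R.filter fun q => op q = some p').card % 2 = 1 := by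
    ext p
    simp only [exOp, Finset.mem_filter, hB]
    tauto
  rw [h2, ← Finset.sum_boole]
  refine Finset.sum_congr rfl fun p' _ => ?_
  split_ifs with h
  · symm
    rw [ZMod.natCast_eq_one_iff_odd]
    exact Nat.odd_iff.2 h
  · symm
    rw [ZMod.natCast_eq_zero_iff_even]
    exact Nat.even_iff.2 (by omega)

open scoped Classical in
theorem rep_of_dual {k : ℕ} (op : TWP k → Option (TWP k)) (D : TWP k → Finset (TWP k))
    (hD : ∀ r, IsTWPat r → ∀ r' ∈ D r, IsTWPat r')
    (h : ∀ r, IsTWPat r → ∀ q, IsTWPat q →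
      (if ∃ p', op q = some p' ∧ Compat p' r then (1 : ZMod 2) else 0) =
        ∑ r' ∈ D r, if Compat q r' then 1 else 0)
    (R S : Finset (TWP k)) (hR : ∀ p ∈ R, IsTWPat p) (hS : ∀ p ∈ S, IsTWPat p)
    (hrep : Represents R S) : Represents (exOp op R) (exOp op S) := by
  intro r hr
  have key : ∀ R : Finset (TWP k), (∀ p ∈ R, IsTWPat p) →
      (((exOp op R).filter fun p => Compat p r).card : ZMod 2) =
        ∑ r' ∈ D r, ((R.filter fun p => Compat p r').card : ZMod 2) := by
    intro R hR
    rw [exOp_count, Finset.sum_congr rfl fun q hq => h r hr q (hR q hq), Finset.sum_comm]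
    simp only [Finset.sum_boole]
  have : (((exOp op R).filter fun p => Compat p r).card : ZMod 2) =
      ((exOp op S).filter fun p => Compat p r).card := by
    rw [key R hR, key S hS]
    refine Finset.sum_congr rfl fun r' hr' => ?_
    exact (ZMod.natCast_eq_natCast_iff' _ _ 2).2 (hrep r' (hD r hr r' hr'))
  exact (ZMod.natCast_eq_natCast_iff' _ _ 2).1 this

def etaP {k : ℕ} (i j : Fin (k + 1)) (p : TWP k) : TWP k :=
  insert ((p.filter fun S => i ∈ S ∨ j ∈ S).sup id) (p.filter fun S => i ∉ S ∧ j ∉ S)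

theorem etaP_eq {k : ℕ} {i j : Fin (k + 1)} {p : TWP k} (hp : Disj p)
    {A B : Finset (Fin (k + 1))} (hA : A ∈ p) (hB : B ∈ p) (hi : i ∈ A) (hj : j ∈ B) :
    etaP i j p = insert (A ∪ B) (p.filter fun S => i ∉ S ∧ j ∉ S) := by
  have : (p.filter fun S => i ∈ S ∨ j ∈ S) = {A, B} := by
    ext S
    simp only [Finset.mem_filter, Finset.mem_insert, Finset.mem_singleton]
    constructor
    · rintro ⟨h1, h2 | h2⟩
      · exact Or.inl (hp S h1 A hA i h2 hi)
      · exact Or.inr (hp S h1 B hB j h2 hj)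
    · rintro (rfl | rfl)
      · exact ⟨hA, Or.inl hi⟩
      · exact ⟨hB, Or.inr hj⟩
  unfold etaP
  rw [this]
  simp

theorem labels_etaP {k : ℕ} {i j : Fin (k + 1)} {p : TWP k} : labels (etaP i j p) = labels p := by
  ext l
  simp only [mem_labels, etaP, Finset.mem_insert, Finset.mem_filter]
  constructor
  · rintro ⟨S, rfl | hS, hl⟩
    · simp [Finset.mem_sup] at hl; grind
    · exact ⟨S, hS.1, hl⟩
  · rintro ⟨S, hS, hl⟩
    by_cases h : i ∈ S ∨ j ∈ S
    · refine ⟨_, Or.inl rfl, ?_⟩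
      simp [Finset.mem_sup]; grind
    · exact ⟨S, Or.inr ⟨hS, by tauto⟩, hl⟩

theorem pat_etaP {k : ℕ} {i j : Fin (k + 1)} {p : TWP k} (hp : IsTWPat p)
    (hi : i ∈ labels p) (hj : j ∈ labels p) : IsTWPat (etaP i j p) := by
  obtain ⟨A, hA, hiA⟩ := (mem_labels p i).1 hi
  obtain ⟨B, hB, hjB⟩ := (mem_labels p j).1 hj
  have h0 : 0 ∈ labels (etaP i j p) := by
    rw [labels_etaP, mem_labels]; exact hp.2.2
  rw [mem_labels] at h0
  have hd := hp.disj
  refine ⟨?_, ?_, h0⟩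
  · rw [etaP_eq hd hA hB hiA hjB]
    intro S hS
    rcases Finset.mem_insert.1 hS with rfl | hS
    · exact ⟨i, by simp [hiA]⟩
    · exact hp.1 S (Finset.mem_filter.1 hS).1
  · rw [etaP_eq hd hA hB hiA hjB]
    intro S hS T hT hST
    rw [Finset.disjoint_left]
    intro l hl hl'
    simp only [Finset.mem_insert, Finset.mem_filter] at hS hT
    have := hd A hA
    have := hd B hB
    have := hd S
    grind

theorem eta_dual_one {k : ℕ} {i j : Fin (k + 1)} (hij : i ≠ j) {q r : TWP k} (hq : IsTWPat q)
    (hr : IsTWPat r) (h : ∃ p', etaOp i j q = some p' ∧ Compat p' r) :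
    ∃ p', etaOp i j r = some p' ∧ Compat p' q := by
  obtain ⟨p', h1, hc⟩ := h
  unfold etaOp at h1
  split_ifs at h1 with hs hl
  · obtain rfl : q = p' := by simpa using h1
    refine ⟨r, ?_, hc.symm' hq.disj hr.disj⟩
    have hL := hc.1
    unfold etaOp
    rw [← hL, if_neg, if_pos hl]
    rintro ⟨S, hS, hi, hj⟩
    have hi' : i ∈ labels q := by rw [hL, mem_labels]; exact ⟨S, hS, hi⟩
    have hj' : j ∈ labels q := by rw [hL, mem_labels]; exact ⟨S, hS, hj⟩
    tauto
  · obtain rfl : etaP i j q = p' := by simpa [etaP] using h1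
    push Not at hl
    obtain ⟨hi, hj⟩ := hl
    have hL : labels q = labels r := by rw [← hc.1, labels_etaP]
    have hi' := hL ▸ hi
    have hj' := hL ▸ hj
    obtain ⟨A, hA, hiA⟩ := (mem_labels q i).1 hi
    obtain ⟨B, hB, hjB⟩ := (mem_labels q j).1 hj
    obtain ⟨A', hA', hiA'⟩ := (mem_labels r i).1 hi'
    obtain ⟨B', hB', hjB'⟩ := (mem_labels r j).1 hj'
    have hqd := hq.disj
    have hrd := hr.disj
    rw [compat_iff (pat_etaP hq hi hj).disj hrd] at hc
    have hev := hc.2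
    have hjA : j ∉ A := fun hx => hs ⟨A, hA, hiA, hx⟩
    have hiB : i ∉ B := fun hx => hs ⟨B, hB, hx, hjB⟩
    have hAB : Disjoint A B := hq.2.1 A hA B hB (by grind)
    let e : ZMod 2 → Fin (k + 1) → ZMod 2 := fun a l => if l = i ∨ l = j then a else 0
    have esum : ∀ a (S : Finset (Fin (k + 1))), ∑ l ∈ S, e a l =
        (if i ∈ S then a else 0) + (if j ∈ S then a else 0) := by
      intro a S
      have : ∀ l, e a l = (if l = i then a else 0) + (if l = j then a else 0) := by
        intro l; simp only [e]; grind
      simp only [this, Finset.sum_add_distrib, Finset.sum_ite_eq']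
    have haa : ∀ a : ZMod 2, a + a = 0 := CharTwo.add_self_eq_zero
    have hdiff : ¬ ∃ S ∈ r, i ∈ S ∧ j ∈ S := by
      rintro ⟨S, hS, hiS, hjS⟩
      have := hev (e 1) ?_ ?_ ?_ i
      · simp [e] at this
      · intro l hl
        rw [labels_etaP] at hl
        simp only [e]
        rw [if_neg]
        rintro (rfl | rfl) <;> contradiction
      · rw [etaP_eq hqd hA hB hiA hjB]
        intro T hT
        rw [esum]
        rcases Finset.mem_insert.1 hT with rfl | hT
        · simp [hiA, hjB, haa]
        · have := (Finset.mem_filter.1 hT).2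
          simp [this]
      · intro T hT
        rw [esum]
        by_cases hiT : i ∈ T
        · obtain rfl := hrd T hT S hS i hiT hiS
          simp [hiT, hjS, haa]
        · have : j ∉ T := fun hx => by
            obtain rfl := hrd T hT S hS j hx hjS
            exact hiT hiS
          simp [hiT, this]
    have hjA' : j ∉ A' := fun hx => hdiff ⟨A', hA', hiA', hx⟩
    have hiB' : i ∉ B' := fun hx => hdiff ⟨B', hB', hx, hjB'⟩
    have hAB' : Disjoint A' B' := hr.2.1 A' hA' B' hB' (by grind)
    refine ⟨etaP i j r, ?_, ?_⟩
    · unfold etaOp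
      rw [if_neg hdiff, if_neg (by tauto)]
      rfl
    rw [compat_iff (pat_etaP hr hi' hj').disj hqd]
    refine ⟨by rw [labels_etaP, hL], ?_⟩
    intro f hf1 hf2 hf3
    rw [labels_etaP, ← hL] at hf1
    rw [etaP_eq hrd hA' hB' hiA' hjB'] at hf2
    have hsum := hf2 (A' ∪ B') (by simp)
    rw [Finset.sum_union hAB'] at hsum
    set a := ∑ l ∈ A', f l with ha
    have hb : ∑ l ∈ B', f l = a := by
      have := haa a
      grind
    have hg := hev (fun l => f l + e a l) ?_ ?_ ?_
    · have hfe : ∀ l, f l = e a l := fun l => by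
        have h1 := hg l
        have h2 := haa (e a l)
        grind
      have h3 := hf3 A hA
      rw [Finset.sum_congr rfl fun l _ => hfe l, esum] at h3
      simp [hiA, hjA] at h3
      intro l
      rw [hfe, h3]
      simp [e]
    · intro l hl
      rw [labels_etaP] at hl
      simp only [e]
      rw [hf1 l hl, if_neg]
      · simp
      · rintro (rfl | rfl) <;> contradiction
    · rw [etaP_eq hqd hA hB hiA hjB]
      intro T hT
      rw [Finset.sum_add_distrib, esum]
      rcases Finset.mem_insert.1 hT with rfl | hT
      · rw [Finset.sum_union hAB, hf3 A hA, hf3 B hB]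
        simp [hiA, hjB, haa]
      · obtain ⟨h1, h2⟩ := Finset.mem_filter.1 hT
        rw [hf3 T h1]
        simp [h2]
    · intro T hT
      rw [Finset.sum_add_distrib, esum]
      by_cases hiT : i ∈ T
      · obtain rfl := hrd T hT A' hA' i hiT hiA'
        simp [hiA', hjA', ← ha, haa]
      · by_cases hjT : j ∈ T
        · obtain rfl := hrd T hT B' hB' j hjT hjB'
          simp [hiB', hjB', hb, haa]
        · rw [hf2 T (by simp [hT, hiT, hjT])]
          simp [hiT, hjT]

theorem pat_etaOp {k : ℕ} {i j : Fin (k + 1)} {p p' : TWP k} (hp : IsTWPat p)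
    (h : etaOp i j p = some p') : IsTWPat p' := by
  unfold etaOp at h
  split_ifs at h with hs hl
  · obtain rfl : p = p' := by simpa using h
    exact hp
  · obtain rfl : etaP i j p = p' := by simpa [etaP] using h
    push Not at hl
    exact pat_etaP hp hl.1 hl.2

/-- For `i ≠ j` in `{1,…,k}`, the exclusive versions of `· ∪ i`, `· ∖ i`
and `η_{i,j}` preserve representation. -/
theorem exclusive_ops_preserve_representation {k : ℕ} (i j : Fin (k + 1))
    (hi : i ≠ 0) (hj : j ≠ 0) (hij : i ≠ j)
    (R S : Finset (TWP k)) (hR : ∀ p ∈ R, IsTWPat p) (hS : ∀ p ∈ S, IsTWPat p)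
    (hrep : Represents R S) :
    Represents (exOp (addLab i) R) (exOp (addLab i) S) ∧
    Represents (exOp (delLab i) R) (exOp (delLab i) S) ∧
    Represents (exOp (etaOp i j) R) (exOp (etaOp i j) S) := by
  classical
  refine ⟨?_, ?_, ?_⟩
  · refine rep_of_dual (addLab i) (fun r => if i ∈ labels r then {delP i r} else ∅) ?_ ?_
      R S hR hS hrep
    · intro r hr r' hr'
      split_ifs at hr' with h
      · rw [Finset.mem_singleton.1 hr']
        exact pat_delP hi hr
      · simp at hr'
    · intro r hr q hq
      have key : (∃ p', addLab i q = some p' ∧ Compat p' r) ↔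
          i ∈ labels r ∧ Compat q (delP i r) := by
        by_cases hiq : i ∈ labels q
        · simp only [addLab, if_pos hiq]
          constructor
          · rintro ⟨p', h, -⟩; simp at h
          · rintro ⟨-, h⟩
            rw [h.1, mem_labels_delP] at hiq
            exact (hiq.2 rfl).elim
        · rw [← add_dual hi hq hr hiq]
          simp [addLab, hiq]
      rw [if_congr key rfl rfl]
      by_cases h : i ∈ labels r <;> simp [h, -Finset.sum_boole]
  · refine rep_of_dual (delLab i)
      (fun r => if i ∈ labels r then ∅ else {r, insert {i} r}) ?_ ?_ R S hR hS hrep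
    · intro r hr r' hr'
      split_ifs at hr' with h
      · simp at hr'
      · rcases Finset.mem_insert.1 hr' with rfl | hr'
        · exact hr
        · rw [Finset.mem_singleton.1 hr']
          exact pat_ins hr h
    · intro r hr q hq
      have key : (∃ p', delLab i q = some p' ∧ Compat p' r) ↔ Compat (delP i q) r := by
        simp [delLab, delP]
      rw [if_congr key rfl rfl]
      have hdq := pat_delP hi hq
      by_cases h : i ∈ labels r
      · rw [if_pos h, if_neg]
        · simp
        · intro hc
          rw [← hc.1, mem_labels_delP] at h
          exact h.2 rfl
      · rw [if_neg h]
        have hne : r ≠ insert {i} r := by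
          intro hc
          apply h
          rw [hc, mem_labels_ins]
          exact Or.inl rfl
        rw [Finset.sum_pair hne]
        have hpi := pat_ins hr h
        by_cases hiq : i ∈ labels q
        · have h1 : ¬ Compat q r := fun hc => h (hc.1 ▸ hiq)
          have h2 : Compat (delP i q) r ↔ Compat q (insert {i} r) := by
            constructor
            · intro hc
              exact Compat.symm' hpi.disj hq.disj
                ((add_dual hi hr hq h).2 ⟨hiq, hc.symm' hdq.disj hr.disj⟩)
            · intro hc
              exact Compat.symm' hr.disj hdq.disj
                ((add_dual hi hr hq h).1 (hc.symm' hq.disj hpi.disj)).2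
          simp [h1, h2]
        · have h1 : ¬ Compat q (insert {i} r) := fun hc => by
            apply hiq
            rw [hc.1, mem_labels_ins]
            exact Or.inl rfl
          have h2 : delP i q = q := by
            ext T
            rw [mem_delP]
            rw [mem_labels] at hiq
            grind
          simp [h1, h2]
  · refine rep_of_dual (etaOp i j) (fun r => (etaOp i j r).toFinset) ?_ ?_ R S hR hS hrep
    · intro r hr r' hr'
      exact pat_etaOp hr (by simpa using hr')
    · intro r hr q hq
      have key : (∃ p', etaOp i j q = some p' ∧ Compat p' r) ↔
          (∃ p', etaOp i j r = some p' ∧ Compat q p') := by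
        constructor
        · intro h
          obtain ⟨p', h1, h2⟩ := eta_dual_one hij hq hr h
          exact ⟨p', h1, h2.symm' (pat_etaOp hr h1).disj hq.disj⟩
        · rintro ⟨p', h1, h2⟩
          exact eta_dual_one hij hr hq ⟨p', h1, h2.symm' hq.disj (pat_etaOp hr h1).disj⟩
      rw [if_congr key rfl rfl]
      rcases etaOp i j r with _ | p <;> simp [-Finset.sum_boole]
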